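/- arXiv:math/0603294 — 7 statements merged into one kernel-verified Lean document; each statement's English description precedes it below -/
import Mathlib

section
/- Let u, u¹ : ℝ^M → M_Q(ℂ) be differentiable Q×Q-matrix-valued functions and let B^n, B^m be constant diagonal Q×Q complex matrices. Fix coordinates x_1, x_n, x_m among x = (x_1,…,x_M). If u satisfies the two N-wave-type equations ∂_{x_n}u − (∂_{x_1}u)B^n + u[B^n,u] = [B^n,u¹] and ∂_{x_m}u − (∂_{x_1}u)B^m + u[B^m,u] = [B^m,u¹], then eliminating u¹ yields the classical (2+1)-dimensional N-wave equation: [∂_{x_n}u, B^m] − [∂_{x_m}u, B^n] + B^m(∂_{x_1}u)B^n − B^n(∂_{x_1}u)B^m − [[u,B^m],[u,B^n]] = 0. -/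
open MeasureTheory Finset

/-- Entrywise partial derivative in the `k`-th coordinate direction of a
matrix-valued function on `ℝ^M`. -/
noncomputable def mpd {M Q : ℕ} (k : Fin M)
    (f : (Fin M → ℝ) → Matrix (Fin Q) (Fin Q) ℂ) (x : Fin M → ℝ) :
    Matrix (Fin Q) (Fin Q) ℂ :=
  Matrix.of fun a b => fderiv ℝ (fun y => f y a b) x (Pi.single k 1)

theorem nwave_elim {R : Type*} [Ring R] (p q d u v N K : R) (hc : K * N = N * K)
    (hn : p - d * N + u * (N * u - u * N) = N * v - v * N)
    (hm : q - d * K + u * (K * u - u * K) = K * v - v * K) :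
    (p * K - K * p) - (q * N - N * q) + K * d * N - N * d * K
      - ((u * K - K * u) * (u * N - N * u) - (u * N - N * u) * (u * K - K * u)) = 0 := by
  have hp : p = N * v - v * N + d * N - u * (N * u - u * N) := by rw [← hn]; abel
  have hq : q = K * v - v * K + d * K - u * (K * u - u * K) := by rw [← hm]; abel
  have hc2 : ∀ y, K * (N * y) = N * (K * y) := fun y => by
    rw [← mul_assoc, hc, mul_assoc]
  subst hp hq
  simp only [mul_sub, sub_mul, mul_add, add_mul, mul_assoc, hc, hc2]
  abel

/-- eliminating `u¹` from two `N`-wave-type equations yields the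
classical (2+1)-dimensional `N`-wave equation.  The coordinates `x_1`, `x_n`,
`x_m` are the distinct indices `i1`, `inn`, `imm` of `Fin M`, and the constant
diagonal matrices `B^n`, `B^m` are `Matrix.diagonal Bn`, `Matrix.diagonal Bm`. -/
theorem stmt1 {M Q : ℕ} (i1 inn imm : Fin M)
    (h1n : i1 ≠ inn) (h1m : i1 ≠ imm) (hnm : inn ≠ imm)
    (Bn Bm : Fin Q → ℂ)
    (u u1 : (Fin M → ℝ) → Matrix (Fin Q) (Fin Q) ℂ)
    (hud : ∀ a b, Differentiable ℝ fun x => u x a b)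
    (hu1d : ∀ a b, Differentiable ℝ fun x => u1 x a b)
    (hn : ∀ x, mpd inn u x - mpd i1 u x * Matrix.diagonal Bn
        + u x * (Matrix.diagonal Bn * u x - u x * Matrix.diagonal Bn)
        = Matrix.diagonal Bn * u1 x - u1 x * Matrix.diagonal Bn)
    (hm : ∀ x, mpd imm u x - mpd i1 u x * Matrix.diagonal Bm
        + u x * (Matrix.diagonal Bm * u x - u x * Matrix.diagonal Bm)
        = Matrix.diagonal Bm * u1 x - u1 x * Matrix.diagonal Bm) :
    ∀ x,
      (mpd inn u x * Matrix.diagonal Bm - Matrix.diagonal Bm * mpd inn u x)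
        - (mpd imm u x * Matrix.diagonal Bn - Matrix.diagonal Bn * mpd imm u x)
        + Matrix.diagonal Bm * mpd i1 u x * Matrix.diagonal Bn
        - Matrix.diagonal Bn * mpd i1 u x * Matrix.diagonal Bm
        - ((u x * Matrix.diagonal Bm - Matrix.diagonal Bm * u x)
              * (u x * Matrix.diagonal Bn - Matrix.diagonal Bn * u x)
            - (u x * Matrix.diagonal Bn - Matrix.diagonal Bn * u x)
              * (u x * Matrix.diagonal Bm - Matrix.diagonal Bm * u x))
        = 0 := by
  intro x
  exact nwave_elim _ _ _ _ (u1 x) _ _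
    (by simp only [Matrix.diagonal_mul_diagonal, mul_comm]) (hn x) (hm x)
end

section
/- Fix n with 1 < n ≤ M. Let Ψ(λ,ν;x), U(ν;x), C(ν;x), G^n(ν;x) be Q×Q-matrix-valued functions (ν ∈ ℝ^{M+1}, x ∈ ℝ^M), differentiable in x, let Φ(λ;x) be a diagonal Q×Q matrix with entries Φ_α(λ;x), let h^n_α(λ), g^n_{αγ}(ν) be scalar functions and B^n a constant diagonal matrix. Assume for all indices and all ν, x: (i) ∂_{x_n}Ψ_{αγ}(λ,ν;x) + (h^n_α(λ) + g^n_{αγ}(ν)) Ψ_{αγ}(λ,ν;x) = Φ_α(λ;x) B^n_α C_{αγ}(ν;x); (ii) ∂_{x_1}Ψ_{αγ}(λ,ν;x) = Φ_α(λ;x) C_{αγ}(ν;x); (iii) Φ_α(λ;x) δ_{αβ} = Σ_γ ∫ Ψ_{αγ}(λ,ν;x) U_{γβ}(ν;x) dν, and the x_1- and x_n-derivatives of this integral may be computed by differentiating under the integral sign; (iv) Φ_α satisfies ∂_{x_n}Φ_α + h^n_α Φ_α − B^n_α ∂_{x_1}Φ_α = 0; (v) u(x) = ∫ C(ν;x)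 U(ν;x) dν; (vi) Σ_γ ∫ Ψ_{αγ}(λ,ν;x) G^n_{γβ}(ν;x) dν = Σ_γ ∫ Ψ_{αγ}(λ,ν;x) g^n_{αγ}(ν) U_{γβ}(ν;x) dν; and all integrals involved converge absolutely. Then Σ_γ ∫ Ψ_{αγ}(λ,ν;x) (E_n)_{γβ}(ν;x) dν = 0 for all α, β, where E_n(ν;x) = ∂_{x_n}U(ν;x) − (∂_{x_1}U(ν;x)) B^n + U(ν;x)[B^n, u(x)] − G^n(ν;x). -/
open MeasureTheory Finset

/-- Partial derivative in the `k`-th coordinate direction of a complex-valued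
function on `ℝ^M`. -/
noncomputable def pd {M : ℕ} (k : Fin M) (f : (Fin M → ℝ) → ℂ) (x : Fin M → ℝ) : ℂ :=
  fderiv ℝ f x (Pi.single k 1)

/-- the dressing-method derivation of the spectral equations
`Ψ * E_n = 0`.  Coordinates of `x ∈ ℝ^M` are indexed by `Fin (M+2)` (index `0`
is `x_1`, the index `n ≠ 0` is `x_n` with `1 < n ≤ M`); spectral parameters
`ν ∈ ℝ^{M+1}` are indexed by `Fin (M+3)` and `∫ … ∂ν` is the Lebesgue integral
over `Fin (M+3) → ℝ`.  Matrices are handled entrywise: `Ψ α γ ν x` is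
`Ψ_{αγ}(λ,ν;x)` (the fixed spectral parameter `λ` is suppressed), and the
scalars `hh α = h^n_α(λ)`, `gg α γ ν = g^n_{αγ}(ν)`, `B α = B^n_α`. -/
theorem stmt5 {M Q : ℕ} (n : Fin (M + 2)) (hn0 : n ≠ 0)
    (Ψ U C G : Fin Q → Fin Q → (Fin (M + 3) → ℝ) → (Fin (M + 2) → ℝ) → ℂ)
    (Φ : Fin Q → (Fin (M + 2) → ℝ) → ℂ)
    (hh : Fin Q → ℂ) (gg : Fin Q → Fin Q → (Fin (M + 3) → ℝ) → ℂ) (B : Fin Q → ℂ)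
    (u : Fin Q → Fin Q → (Fin (M + 2) → ℝ) → ℂ)
    (hΨd : ∀ α γ ν, Differentiable ℝ (Ψ α γ ν))
    (hUd : ∀ γ β ν, Differentiable ℝ (U γ β ν))
    -- (i) the x_n-equation for the dressing kernel Ψ
    (h1 : ∀ α γ ν x, pd n (Ψ α γ ν) x + (hh α + gg α γ ν) * Ψ α γ ν x
        = Φ α x * B α * C α γ ν x)
    -- (ii) the x_1-equation for the dressing kernel Ψ
    (h2 : ∀ α γ ν x, pd 0 (Ψ α γ ν) x = Φ α x * C α γ ν x)
    -- (iii) Φ δ_{αβ} = Ψ * U, with derivatives computable under the integral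
    (h3 : ∀ α β x, Φ α x * (if α = β then 1 else 0)
        = ∫ ν, ∑ γ, Ψ α γ ν x * U γ β ν x)
    (h3swap : ∀ k : Fin (M + 2), (k = 0 ∨ k = n) → ∀ α β x,
        pd k (fun y => ∫ ν, ∑ γ, Ψ α γ ν y * U γ β ν y) x
          = ∫ ν, ∑ γ, pd k (fun y => Ψ α γ ν y * U γ β ν y) x)
    -- (iv) the equation for Φ
    (h4 : ∀ α x, pd n (Φ α) x + hh α * Φ α x - B α * pd 0 (Φ α) x = 0)
    -- (v) the field u = C * U
    (h5 : ∀ δ ε x, u δ ε x = ∫ ν, ∑ γ, C δ γ ν x * U γ ε ν x)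
    -- (vi) Ψ * G^n = Ψ^n * U
    (h6 : ∀ α β x, (∫ ν, ∑ γ, Ψ α γ ν x * G γ β ν x)
        = ∫ ν, ∑ γ, Ψ α γ ν x * gg α γ ν * U γ β ν x)
    -- absolute convergence of all integrals involved
    (hi1 : ∀ α β x, Integrable fun ν => ∑ γ, Ψ α γ ν x * U γ β ν x)
    (hi2 : ∀ α β x, Integrable fun ν => ∑ γ, Ψ α γ ν x * G γ β ν x)
    (hi3 : ∀ α β x, Integrable fun ν => ∑ γ, Ψ α γ ν x * gg α γ ν * U γ β ν x)
    (hi4 : ∀ α β x, Integrable fun ν => ∑ γ, C α γ ν x * U γ β ν x)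
    (hi5 : ∀ (k : Fin (M + 2)) α β x,
      Integrable fun ν => ∑ γ, Ψ α γ ν x * pd k (U γ β ν) x)
    (hi6 : ∀ (k : Fin (M + 2)) α β x,
      Integrable fun ν => ∑ γ, pd k (Ψ α γ ν) x * U γ β ν x) :
    -- conclusion: Ψ * E_n = 0
    ∀ α β x,
      (∫ ν, ∑ γ, Ψ α γ ν x *
        (pd n (U γ β ν) x - pd 0 (U γ β ν) x * B β
          + (∑ δ, U γ δ ν x * (B δ * u δ β x - u δ β x * B β))
          - G γ β ν x)) = 0 := by
  intro α β x
  -- Leibniz rule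
  have hL : ∀ (k : Fin (M + 2)) γ ν, pd k (fun y => Ψ α γ ν y * U γ β ν y) x
      = pd k (Ψ α γ ν) x * U γ β ν x + Ψ α γ ν x * pd k (U γ β ν) x := by
    intro k γ ν
    unfold pd
    rw [fderiv_fun_mul (hΨd α γ ν x) (hUd γ β ν x)]
    simp only [add_apply, smul_apply, smul_eq_mul]
    ring
  have hD : ∀ k : Fin (M + 2), (k = 0 ∨ k = n) →
      pd k (Φ α) x * (if α = β then 1 else 0)
        = (∫ ν, ∑ γ, pd k (Ψ α γ ν) x * U γ β ν x)
          + ∫ ν, ∑ γ, Ψ α γ ν x * pd k (U γ β ν) x := by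
    intro k hk
    have e := h3swap k hk α β x
    rw [← integral_add (hi6 k α β x) (hi5 k α β x)]
    have e2 : (fun y => ∫ ν, ∑ γ, Ψ α γ ν y * U γ β ν y)
        = fun y => Φ α y * (if α = β then 1 else 0) := by
      funext y
      exact (h3 α β y).symm
    rw [e2] at e
    have e3 : pd k (fun y => Φ α y * (if α = β then 1 else 0)) x
        = pd k (Φ α) x * (if α = β then 1 else 0) := by
      by_cases hab : α = β
      · simp [hab]
      · simp [hab, pd]
    rw [← e3, e]
    congr 1
    funext ν
    rw [← Finset.sum_add_distrib]
    exact Finset.sum_congr rfl fun γ _ => hL k γ ν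
  have D0 := hD 0 (Or.inl rfl)
  have Dn := hD n (Or.inr rfl)
  have I0 : (∫ ν, ∑ γ, pd 0 (Ψ α γ ν) x * U γ β ν x) = Φ α x * u α β x := by
    rw [h5, ← integral_const_mul]
    congr 1
    funext ν
    rw [Finset.mul_sum]
    refine Finset.sum_congr rfl fun γ _ => ?_
    rw [h2]
    ring
  have In : (∫ ν, ∑ γ, pd n (Ψ α γ ν) x * U γ β ν x)
      = Φ α x * B α * u α β x - hh α * (Φ α x * (if α = β then 1 else 0))
        - ∫ ν, ∑ γ, Ψ α γ ν x * gg α γ ν * U γ β ν x := by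
    rw [h5, h3, ← integral_const_mul, ← integral_const_mul,
      ← integral_sub' ((hi4 α β x).const_mul _) ((hi1 α β x).const_mul _),
      ← integral_sub' (((hi4 α β x).const_mul _).sub ((hi1 α β x).const_mul _)) (hi3 α β x)]
    congr 1
    funext ν
    simp only [Pi.sub_apply]
    rw [Finset.mul_sum, Finset.mul_sum, ← Finset.sum_sub_distrib, ← Finset.sum_sub_distrib]
    refine Finset.sum_congr rfl fun γ _ => ?_
    linear_combination (U γ β ν x) * h1 α γ ν x
  have hS : Integrable (fun ν => ∑ δ, (B δ * u δ β x - u δ β x * B β)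
      * ∑ γ, Ψ α γ ν x * U γ δ ν x) :=
    integrable_finsetSum _ fun δ _ => (hi1 α δ x).const_mul _
  have IS : (∫ ν, ∑ δ, (B δ * u δ β x - u δ β x * B β) * ∑ γ, Ψ α γ ν x * U γ δ ν x)
      = (B α * u α β x - u α β x * B β) * Φ α x := by
    rw [integral_finsetSum _ fun δ _ => (hi1 α δ x).const_mul _]
    simp_rw [integral_const_mul, ← h3]
    simp
  have key : (∫ ν, ∑ γ, Ψ α γ ν x *
        (pd n (U γ β ν) x - pd 0 (U γ β ν) x * B β
          + (∑ δ, U γ δ ν x * (B δ * u δ β x - u δ β x * B β))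
          - G γ β ν x))
      = (∫ ν, ∑ γ, Ψ α γ ν x * pd n (U γ β ν) x)
        - B β * (∫ ν, ∑ γ, Ψ α γ ν x * pd 0 (U γ β ν) x)
        + (∫ ν, ∑ δ, (B δ * u δ β x - u δ β x * B β) * ∑ γ, Ψ α γ ν x * U γ δ ν x)
        - ∫ ν, ∑ γ, Ψ α γ ν x * G γ β ν x := by
    have j0 := (hi5 0 α β x).const_mul (B β)
    have j1 := (hi5 n α β x).sub j0
    rw [← integral_const_mul, ← integral_sub' (hi5 n α β x) j0, ← integral_add' j1 hS,
      ← integral_sub' (j1.add hS) (hi2 α β x)]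
    congr 1
    funext ν
    have sw : (∑ δ, (B δ * u δ β x - u δ β x * B β) * ∑ γ, Ψ α γ ν x * U γ δ ν x)
        = ∑ γ, Ψ α γ ν x * ∑ δ, U γ δ ν x * (B δ * u δ β x - u δ β x * B β) := by
      simp_rw [Finset.mul_sum]
      rw [Finset.sum_comm]
      refine Finset.sum_congr rfl fun γ _ => Finset.sum_congr rfl fun δ _ => ?_
      ring
    simp only [Pi.sub_apply, Pi.add_apply]
    rw [sw, Finset.mul_sum, ← Finset.sum_sub_distrib, ← Finset.sum_add_distrib,
      ← Finset.sum_sub_distrib]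
    refine Finset.sum_congr rfl fun γ _ => ?_
    ring
  rw [key, IS, h6]
  rw [I0] at D0
  rw [In] at Dn
  have hB : (B α - B β) * (if α = β then (1 : ℂ) else 0) = 0 := by
    by_cases hab : α = β
    · simp [hab]
    · simp [hab]
  linear_combination (if α = β then (1 : ℂ) else 0) * h4 α x - Dn + B β * D0
    + pd 0 (Φ α) x * hB
end

section
/- Fix n with 1 < n ≤ M. Let C(ν;x), U(ν;x), G^n(ν;x) be Q×Q-matrix-valued functions (ν ∈ ℝ^{M+1}, x ∈ ℝ^M), differentiable in x, let g^n_{αβ}(ν) be scalar functions and B^n a constant diagonal Q×Q matrix. Define u(x) = ∫ C(ν;x)U(ν;x) dν and u¹(x) = ∫ (∂_{x_1}C(ν;x)) U(ν;x) dν, and assume x-derivatives of these integrals may be computed under the integral sign and all integrals converge absolutely. Assume C satisfies entrywise ∂_{x_n}C_{αβ} + g^n_{αβ}(ν) C_{αβ} − B^n_α ∂_{x_1}C_{αβ} = 0, and U satisfies pointwise in ν the spectral equation ∂_{x_n}U − (∂_{x_1}U)B^n + U[B^n,u] − G^n = 0. Then u satisfies ∂_{x_n}u − (∂_{x_1}u)B^n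 + u[B^n,u] = [B^n, u¹] − ∫ C^{1n}(ν;x) U(ν;x) dν + ∫ C(ν;x) G^n(ν;x) dν, where C^{1n}_{αβ}(ν;x) = C_{αβ}(ν;x) g^n_{αβ}(ν). -/
open MeasureTheory Finset

/-- applying the dressing function `C` to the spectral equation
yields the `N`-wave-type nonlinear equation for the field `u`.  Coordinates are
indexed by `Fin (M+2)` (index `0` is `x_1`, index `n ≠ 0` is `x_n`); spectral
parameters `ν ∈ ℝ^{M+1}` by `Fin (M+3)`.  Matrices are entrywise:
`g α β ν = g^n_{αβ}(ν)` and `B α = B^n_α` (`B^n` diagonal). -/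
theorem stmt6 {M Q : ℕ} (n : Fin (M + 2)) (hn0 : n ≠ 0)
    (C U G : Fin Q → Fin Q → (Fin (M + 3) → ℝ) → (Fin (M + 2) → ℝ) → ℂ)
    (g : Fin Q → Fin Q → (Fin (M + 3) → ℝ) → ℂ) (B : Fin Q → ℂ)
    (hCd : ∀ α γ ν, Differentiable ℝ (C α γ ν))
    (hUd : ∀ γ β ν, Differentiable ℝ (U γ β ν))
    (hGd : ∀ γ β ν, Differentiable ℝ (G γ β ν))
    (u u1 : Fin Q → Fin Q → (Fin (M + 2) → ℝ) → ℂ)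
    (hu : ∀ α β x, u α β x = ∫ ν, ∑ γ, C α γ ν x * U γ β ν x)
    (hu1 : ∀ α β x, u1 α β x = ∫ ν, ∑ γ, pd 0 (C α γ ν) x * U γ β ν x)
    -- absolute convergence of all integrals involved
    (hiu : ∀ α β x, Integrable fun ν => ∑ γ, C α γ ν x * U γ β ν x)
    (hiu1 : ∀ α β x, Integrable fun ν => ∑ γ, pd 0 (C α γ ν) x * U γ β ν x)
    (hiG : ∀ α β x, Integrable fun ν => ∑ γ, C α γ ν x * G γ β ν x)
    (hig : ∀ α β x, Integrable fun ν => ∑ γ, C α γ ν x * g α γ ν * U γ β ν x)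
    (hiCU : ∀ (k : Fin (M + 2)) α β x,
      Integrable fun ν => ∑ γ, pd k (C α γ ν) x * U γ β ν x)
    (hiCU' : ∀ (k : Fin (M + 2)) α β x,
      Integrable fun ν => ∑ γ, C α γ ν x * pd k (U γ β ν) x)
    -- derivatives of u may be computed under the integral sign
    (hswap : ∀ (k : Fin (M + 2)) α β x,
      pd k (u α β) x = ∫ ν, ∑ γ, pd k (fun y => C α γ ν y * U γ β ν y) x)
    -- the dressing equation for C, entrywise
    (hC : ∀ α γ ν x, pd n (C α γ ν) x + g α γ ν * C α γ ν x
        - B α * pd 0 (C α γ ν) x = 0)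
    -- the spectral equation for U, pointwise in ν
    (hU : ∀ γ β ν x, pd n (U γ β ν) x - pd 0 (U γ β ν) x * B β
        + (∑ δ, U γ δ ν x * (B δ * u δ β x - u δ β x * B β)) - G γ β ν x = 0) :
    -- conclusion: the N-wave-type equation for u
    ∀ α β x,
      pd n (u α β) x - pd 0 (u α β) x * B β
        + (∑ δ, u α δ x * (B δ * u δ β x - u δ β x * B β))
      = (B α * u1 α β x - u1 α β x * B β)
        - (∫ ν, ∑ γ, C α γ ν x * g α γ ν * U γ β ν x)
        + ∫ ν, ∑ γ, C α γ ν x * G γ β ν x := by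
  intro α β x
  have hpd : ∀ (k : Fin (M + 2)) γ ν, pd k (fun y => C α γ ν y * U γ β ν y) x
      = pd k (C α γ ν) x * U γ β ν x + C α γ ν x * pd k (U γ β ν) x := by
    intro k γ ν
    unfold pd
    rw [fderiv_fun_mul (hCd α γ ν x) (hUd γ β ν x)]
    simp
    ring
  have hk : ∀ k : Fin (M + 2), pd k (u α β) x
      = (∫ ν, ∑ γ, pd k (C α γ ν) x * U γ β ν x)
        + ∫ ν, ∑ γ, C α γ ν x * pd k (U γ β ν) x := by
    intro k
    rw [hswap, ← integral_add (hiCU k α β x) (hiCU' k α β x)]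
    refine integral_congr_ae (Filter.Eventually.of_forall fun ν => ?_)
    simp only [hpd, Finset.sum_add_distrib]
  have h1 : (∫ ν, ∑ γ, pd n (C α γ ν) x * U γ β ν x)
      = B α * u1 α β x - ∫ ν, ∑ γ, C α γ ν x * g α γ ν * U γ β ν x := by
    rw [hu1, ← integral_const_mul, ← integral_sub ((hiu1 α β x).const_mul _) (hig α β x)]
    refine integral_congr_ae (Filter.Eventually.of_forall fun ν => ?_)
    simp only [Finset.mul_sum, ← Finset.sum_sub_distrib]
    refine Finset.sum_congr rfl fun γ _ => ?_
    linear_combination (U γ β ν x) * hC α γ ν x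
  have h2 : (∫ ν, ∑ γ, C α γ ν x * pd n (U γ β ν) x)
      = (∫ ν, ∑ γ, C α γ ν x * pd 0 (U γ β ν) x) * B β
        - (∑ δ, u α δ x * (B δ * u δ β x - u δ β x * B β))
        + ∫ ν, ∑ γ, C α γ ν x * G γ β ν x := by
    have hs : (∑ δ, u α δ x * (B δ * u δ β x - u δ β x * B β))
        = ∫ ν, ∑ δ, (∑ γ, C α γ ν x * U γ δ ν x) * (B δ * u δ β x - u δ β x * B β) := by
      rw [integral_finsetSum _ fun δ _ => (hiu α δ x).mul_const _]
      refine Finset.sum_congr rfl fun δ _ => ?_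
      rw [integral_mul_const, ← hu]
    have hsi : Integrable fun ν =>
        ∑ δ, (∑ γ, C α γ ν x * U γ δ ν x) * (B δ * u δ β x - u δ β x * B β) :=
      integrable_finsetSum _ fun δ _ => (hiu α δ x).mul_const _
    have h0 := (hiCU' 0 α β x).mul_const (B β)
    rw [hs, ← integral_mul_const, ← integral_sub h0 hsi]
    refine Eq.trans ?_ (integral_add (h0.sub hsi) (hiG α β x))
    refine integral_congr_ae (Filter.Eventually.of_forall fun ν => ?_)
    simp only [Pi.sub_apply, Finset.sum_mul]
    rw [Finset.sum_comm (f := fun δ γ => C α γ ν x * U γ δ ν x * (B δ * u δ β x - u δ β x * B β)),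
      ← Finset.sum_sub_distrib, ← Finset.sum_add_distrib]
    refine Finset.sum_congr rfl fun γ _ => ?_
    have e : ∑ δ, C α γ ν x * U γ δ ν x * (B δ * u δ β x - u δ β x * B β)
        = C α γ ν x * ∑ δ, U γ δ ν x * (B δ * u δ β x - u δ β x * B β) := by
      rw [Finset.mul_sum]
      exact Finset.sum_congr rfl fun δ _ => mul_assoc _ _ _
    rw [e]
    linear_combination (C α γ ν x) * hU γ β ν x
  rw [hk n, hk 0, h1, h2, ← hu1]
  ring
end

section
/- Fix indices α ≠ β in {1,…,Q}, real constants B^i_γ (2 ≤ i ≤ M, 1 ≤ γ ≤ Q), and complex constants S^i_{αβ} satisfying Σ_{i=2}^{M} S^i_{αβ}(B^i_α − B^i_β) = 0. Let Û : ℝ × ℝ^M → M_Q(ℂ) be differentiable, set G¹_γ(λ_1;x) = exp( λ_1 (x_1 + Σ_{i=2}^{M} B^i_γ x_i) ), and define u_{γδ}(x) = ∫_ℝ G¹_γ(λ_1;x) Û_{γδ}(λ_1;x) dλ_1 for all γ, δ. Assume all the integrals ∫_ℝ G¹_γ Û_{γδ} dλ_1, ∫_ℝ λ_1 G¹_γ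 Û_{γδ} dλ_1, ∫_ℝ G¹_γ ∂_{x_k}Û_{γδ} dλ_1 converge absolutely, and that ∂_{x_k}u_{γδ} = ∫_ℝ ∂_{x_k}( G¹_γ Û_{γδ} ) dλ_1 for every k. Assume that for every λ_1 ∈ ℝ and x, Σ_{i=2}^{M} S^i_{αβ} ( ∂_{x_i}Û_{αβ} − B^i_β ∂_{x_1}Û_{αβ} + Σ_{γ=1}^{Q} Û_{αγ} u_{γβ}(B^i_γ − B^i_β) − λ_1 Û_{αβ}(B^i_α − B^i_β) ) = 0. Then u satisfies the nonlinear N-wave-type equation Σ_{i=2}^{M} S^i_{αβ} ( ∂_{x_i}u_{αβ} − B^i_β ∂_{x_1}u_{αβ} + Σ_{γ ≠ α, γ ≠ β} u_{αγ} u_{γβ} (B^i_γ − B^i_β) ) = 0. -/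
open MeasureTheory Finset

def HI (f : ℝ → ℂ) (a : ℂ) : Prop := Integrable f ∧ ∫ t, f t = a

lemma HI.add {f g : ℝ → ℂ} {a b : ℂ} (hf : HI f a) (hg : HI g b) :
    HI (fun t => f t + g t) (a + b) :=
  ⟨hf.1.add hg.1, by rw [integral_add hf.1 hg.1, hf.2, hg.2]⟩

lemma HI.sub {f g : ℝ → ℂ} {a b : ℂ} (hf : HI f a) (hg : HI g b) :
    HI (fun t => f t - g t) (a - b) :=
  ⟨hf.1.sub hg.1, by rw [integral_sub hf.1 hg.1, hf.2, hg.2]⟩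

lemma HI.cmul {f : ℝ → ℂ} {a : ℂ} (c : ℂ) (hf : HI f a) :
    HI (fun t => c * f t) (c * a) :=
  ⟨hf.1.const_mul c, by rw [integral_const_mul, hf.2]⟩

lemma HI.mulc {f : ℝ → ℂ} {a : ℂ} (hf : HI f a) (c : ℂ) :
    HI (fun t => f t * c) (a * c) :=
  ⟨hf.1.mul_const c, by rw [integral_mul_const, hf.2]⟩

lemma HI.sum {ι : Type} (s : Finset ι) {f : ι → ℝ → ℂ} {a : ι → ℂ}
    (hf : ∀ i, HI (f i) (a i)) : HI (fun t => ∑ i ∈ s, f i t) (∑ i ∈ s, a i) :=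
  ⟨integrable_finsetSum s fun i _ => (hf i).1, by
    rw [integral_finsetSum s fun i _ => (hf i).1]
    exact Finset.sum_congr rfl fun i _ => (hf i).2⟩

lemma pd_G {M : ℕ} (b : Fin (M + 2) → ℝ) (t : ℝ) (U : (Fin (M + 2) → ℝ) → ℂ)
    (hU : Differentiable ℝ U) (k : Fin (M + 2)) (x : Fin (M + 2) → ℝ) :
    pd k (fun x => Complex.exp ((t : ℂ) * ((x 0 : ℂ)
        + ∑ i ∈ Finset.univ.filter (fun i => i ≠ (0 : Fin (M + 2))),
            (b i : ℂ) * (x i : ℂ))) * U x) x =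
    Complex.exp ((t : ℂ) * ((x 0 : ℂ)
        + ∑ i ∈ Finset.univ.filter (fun i => i ≠ (0 : Fin (M + 2))),
            (b i : ℂ) * (x i : ℂ))) * pd k U x
     + (if k = 0 then 1 else (b k : ℂ)) * ((t : ℂ) * Complex.exp ((t : ℂ) * ((x 0 : ℂ)
        + ∑ i ∈ Finset.univ.filter (fun i => i ≠ (0 : Fin (M + 2))),
            (b i : ℂ) * (x i : ℂ))) * U x) := by
  have hc : ∀ i : Fin (M + 2), HasFDerivAt (fun y : Fin (M + 2) → ℝ => ((y i : ℝ) : ℂ))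
      (Complex.ofRealCLM.comp (ContinuousLinearMap.proj (R := ℝ) (φ := fun _ => ℝ) i)) x :=
    fun i => (Complex.ofRealCLM.comp
      (ContinuousLinearMap.proj (R := ℝ) (φ := fun _ => ℝ) i)).hasFDerivAt
  have h := ((((hc 0).add (HasFDerivAt.fun_sum
    (u := Finset.univ.filter (fun i => i ≠ (0 : Fin (M + 2))))
    (fun i _ => (hc i).const_mul (b i : ℂ)))).const_mul (t : ℂ)).cexp).mul (hU x).hasFDerivAt
  unfold pd
  have h2 := h.fderiv
  simp only [Pi.add_def, Pi.mul_def] at h2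
  rw [h2]
  have hs : (∑ i ∈ Finset.univ.filter (fun i => i ≠ (0 : Fin (M + 2))),
      (b i : ℂ) * (((Pi.single k (1 : ℝ) : Fin (M + 2) → ℝ) i : ℝ) : ℂ))
      = if k = 0 then 0 else (b k : ℂ) := by
    rw [Finset.sum_filter, Finset.sum_eq_single k]
    · by_cases hk : k = 0 <;> simp [hk]
    · intro i _ hik
      simp [Pi.single_apply, hik]
    · simp
  simp at hs ⊢
  rw [hs]
  by_cases hk : k = 0
  · subst hk; simp; ring
  · simp [hk, Ne.symm hk]; ring

/-- the single linear spectral equation for `Û`, multiplied by `G¹`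
and integrated over the spectral parameter `λ_1 ∈ ℝ`, produces the
multidimensional nonlinear `N`-wave equation for the field `u`.  Coordinates are
indexed by `Fin (M+2)` (index `0` is `x_1`, indices `i ≠ 0` are `x_i`,
`2 ≤ i ≤ M`); `Uh t γ δ x = Û_{γδ}(λ_1;x)` with `t = λ_1`. -/
theorem stmt8 {M Q : ℕ} (α β : Fin Q) (hαβ : α ≠ β)
    (B : Fin (M + 2) → Fin Q → ℝ) (S : Fin (M + 2) → ℂ)
    (hS : ∑ i ∈ Finset.univ.filter (fun i => i ≠ (0 : Fin (M + 2))),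
      S i * ((B i α : ℂ) - (B i β : ℂ)) = 0)
    (Uh : ℝ → Fin Q → Fin Q → (Fin (M + 2) → ℝ) → ℂ)
    (hUd : ∀ γ δ, Differentiable ℝ
      (fun p : ℝ × (Fin (M + 2) → ℝ) => Uh p.1 γ δ p.2))
    (G1 : Fin Q → ℝ → (Fin (M + 2) → ℝ) → ℂ)
    (hG1 : G1 = fun (γ : Fin Q) (t : ℝ) (x : Fin (M + 2) → ℝ) => Complex.exp ((t : ℂ) * ((x 0 : ℂ)
        + ∑ i ∈ Finset.univ.filter (fun i => i ≠ (0 : Fin (M + 2))),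
            (B i γ : ℂ) * (x i : ℂ))))
    (u : Fin Q → Fin Q → (Fin (M + 2) → ℝ) → ℂ)
    (hu : ∀ γ δ x, u γ δ x = ∫ t : ℝ, G1 γ t x * Uh t γ δ x)
    -- absolute convergence of the integrals
    (hint1 : ∀ γ δ x, Integrable fun t : ℝ => G1 γ t x * Uh t γ δ x)
    (hint2 : ∀ γ δ x, Integrable fun t : ℝ => (t : ℂ) * G1 γ t x * Uh t γ δ x)
    (hint3 : ∀ (k : Fin (M + 2)) γ δ x,
      Integrable fun t : ℝ => G1 γ t x * pd k (Uh t γ δ) x)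
    -- derivatives of u may be computed under the integral sign
    (hswap : ∀ (k : Fin (M + 2)) γ δ x,
      pd k (u γ δ) x = ∫ t : ℝ, pd k (fun y => G1 γ t y * Uh t γ δ y) x)
    -- the single linear spectral equation, for every λ_1 and x
    (hspec : ∀ (t : ℝ) x,
      ∑ i ∈ Finset.univ.filter (fun i => i ≠ (0 : Fin (M + 2))),
        S i * (pd i (Uh t α β) x - (B i β : ℂ) * pd 0 (Uh t α β) x
          + (∑ γ, Uh t α γ x * u γ β x * ((B i γ : ℂ) - (B i β : ℂ)))
          - (t : ℂ) * Uh t α β x * ((B i α : ℂ) - (B i β : ℂ))) = 0) :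
    -- conclusion: the nonlinear N-wave-type equation for u
    ∀ x, ∑ i ∈ Finset.univ.filter (fun i => i ≠ (0 : Fin (M + 2))),
      S i * (pd i (u α β) x - (B i β : ℂ) * pd 0 (u α β) x
        + ∑ γ ∈ Finset.univ.filter (fun γ => γ ≠ α ∧ γ ≠ β),
            u α γ x * u γ β x * ((B i γ : ℂ) - (B i β : ℂ))) = 0 := by
  intro x
  have hd : ∀ t γ δ, Differentiable ℝ (Uh t γ δ) := fun t γ δ =>
    (hUd γ δ).comp ((differentiable_const t).prodMk differentiable_id)
  have hpd : ∀ k t, pd k (fun y => G1 α t y * Uh t α β y) x =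
      G1 α t x * pd k (Uh t α β) x
        + (if k = 0 then 1 else (B k α : ℂ)) * ((t : ℂ) * G1 α t x * Uh t α β x) := by
    intro k t
    subst hG1
    exact pd_G (fun i => B i α) t (Uh t α β) (hd t α β) k x
  obtain ⟨J, hJ⟩ : ∃ J, HI (fun t : ℝ => (t : ℂ) * G1 α t x * Uh t α β x) J :=
    ⟨_, hint2 α β x, rfl⟩
  obtain ⟨I, hI⟩ : ∃ I : Fin (M + 2) → ℂ,
      ∀ k, HI (fun t : ℝ => G1 α t x * pd k (Uh t α β) x) (I k) :=
    ⟨_, fun k => ⟨hint3 k α β x, rfl⟩⟩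
  have hU : ∀ γ, HI (fun t : ℝ => G1 α t x * Uh t α γ x) (u α γ x) :=
    fun γ => ⟨hint1 α γ x, (hu α γ x).symm⟩
  have hpu : ∀ k, pd k (u α β) x = I k + (if k = 0 then 1 else (B k α : ℂ)) * J := by
    intro k
    rw [hswap]
    simp only [hpd]
    exact ((hI k).add (hJ.cmul _)).2
  have key := HI.sum (Finset.univ.filter (fun i => i ≠ (0 : Fin (M + 2)))) (fun i =>
    HI.cmul (S i) ((((hI i).sub ((hI 0).cmul (B i β : ℂ))).add
      (HI.sum Finset.univ (fun γ => ((hU γ).mulc (u γ β x)).mulc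
        ((B i γ : ℂ) - (B i β : ℂ))))).sub (hJ.mulc ((B i α : ℂ) - (B i β : ℂ)))))
  have key2 := key.2
  have hz : ∀ t : ℝ, (∑ i ∈ Finset.univ.filter (fun i => i ≠ (0 : Fin (M + 2))),
      S i * (G1 α t x * pd i (Uh t α β) x - (B i β : ℂ) * (G1 α t x * pd 0 (Uh t α β) x)
          + (∑ γ, G1 α t x * Uh t α γ x * u γ β x * ((B i γ : ℂ) - (B i β : ℂ)))
          - (t : ℂ) * G1 α t x * Uh t α β x * ((B i α : ℂ) - (B i β : ℂ)))) = 0 := by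
    intro t
    rw [← mul_zero (G1 α t x), ← hspec t x, Finset.mul_sum]
    refine Finset.sum_congr rfl fun i _ => ?_
    have : (∑ γ, G1 α t x * Uh t α γ x * u γ β x * ((B i γ : ℂ) - (B i β : ℂ)))
      = G1 α t x * ∑ γ, Uh t α γ x * u γ β x * ((B i γ : ℂ) - (B i β : ℂ)) := by
      rw [Finset.mul_sum]
      exact Finset.sum_congr rfl fun γ _ => by ring
    rw [this]; ring
  simp only [hz, integral_zero] at key2
  have hsplit : ∀ i, (∑ γ, u α γ x * u γ β x * ((B i γ : ℂ) - (B i β : ℂ)))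
      = (∑ γ ∈ Finset.univ.filter (fun γ => γ ≠ α ∧ γ ≠ β),
            u α γ x * u γ β x * ((B i γ : ℂ) - (B i β : ℂ)))
        + u α α x * u α β x * ((B i α : ℂ) - (B i β : ℂ)) := by
    intro i
    rw [← Finset.add_sum_erase _ _ (Finset.mem_univ α), add_comm]
    congr 1
    symm
    apply Finset.sum_subset
    · intro γ; simp; tauto
    · intro γ h1 h2
      have : γ = β := by simp at h1 h2; tauto
      simp [this]
  have h3 : (∑ i ∈ Finset.univ.filter (fun i => i ≠ (0 : Fin (M + 2))),
      S i * (pd i (u α β) x - (B i β : ℂ) * pd 0 (u α β) x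
        + ∑ γ ∈ Finset.univ.filter (fun γ => γ ≠ α ∧ γ ≠ β),
            u α γ x * u γ β x * ((B i γ : ℂ) - (B i β : ℂ))))
      = (∑ i ∈ Finset.univ.filter (fun i => i ≠ (0 : Fin (M + 2))),
      S i * (I i - (B i β : ℂ) * I 0
        + (∑ γ, u α γ x * u γ β x * ((B i γ : ℂ) - (B i β : ℂ)))
        - J * ((B i α : ℂ) - (B i β : ℂ))))
      + (2 * J - u α α x * u α β x) *
        ∑ i ∈ Finset.univ.filter (fun i => i ≠ (0 : Fin (M + 2))),
          S i * ((B i α : ℂ) - (B i β : ℂ)) := by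
    rw [Finset.mul_sum, ← Finset.sum_add_distrib]
    refine Finset.sum_congr rfl fun i hi => ?_
    have hi0 : i ≠ 0 := by simpa using hi
    rw [hsplit, hpu, hpu, if_neg hi0, if_pos rfl]
    ring
  rw [h3, ← key2, hS]
  ring
end

section
/- Fix spectral parameters λ, μ ∈ ℝ^{M+1} with λ_2 + μ_1 ≠ 0, a constant σ_α ∈ {1,−1}, and complex constants h^j_α, g^j_{αβ} (2 ≤ j ≤ M), C^0_{αβ}. Define Φ_α(x) = exp( λ_2 (x_1 + x_2 σ_α) + x_M λ_2² σ_α − Σ_{j=2}^{M} h^j_α x_j ), C_{αβ}(x) = exp( μ_1 (x_1 + x_2 σ_α) − x_M μ_1² σ_α − Σ_{j=2}^{M} g^j_{αβ} x_j ) C^0_{αβ}, and Ψ_{αβ}(x) = Φ_α(x) C_{αβ}(x) / (λ_2 + μ_1). Then Ψ_{αβ} satisfies: ∂_{x_1}Ψ_{αβ} = Φ_α C_{αβ}; ∂_{x_2}Ψ_{αβ} + (h²_α + g²_{αβ}) Ψ_{αβ} = Φ_α σ_α C_{αβ}; ∂_{x_n}Ψ_{αβ} + (h^n_α + g^n_{αβ})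 Ψ_{αβ} = 0 for 2 < n < M; and ∂_{x_M}Ψ_{αβ} + (h^M_α + g^M_{αβ}) Ψ_{αβ} = (∂_{x_1}Φ_α) σ_α C_{αβ} − Φ_α σ_α ∂_{x_1}C_{αβ}. -/
open MeasureTheory Finset

theorem pd_exp {N : ℕ} (c : Fin N → ℂ) (A : ℂ) (k : Fin N) (x : Fin N → ℝ) :
    pd k (fun x => Complex.exp (∑ j, c j * (x j : ℂ)) * A) x
      = c k * (Complex.exp (∑ j, c j * (x j : ℂ)) * A) := by
  have h1 : HasFDerivAt (fun x : Fin N → ℝ => ∑ j, c j * (x j : ℂ))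
      (∑ j, c j • (Complex.ofRealCLM.comp
        (ContinuousLinearMap.proj (R := ℝ) (φ := fun _ : Fin N => ℝ) j))) x := by
    refine HasFDerivAt.fun_sum fun j _ => ?_
    exact (Complex.ofRealCLM.comp
        (ContinuousLinearMap.proj (R := ℝ) (φ := fun _ : Fin N => ℝ) j)).hasFDerivAt.const_mul (c j)
  have h2 := (h1.cexp).mul_const A
  unfold pd
  rw [h2.fderiv]
  simp [Pi.single_apply, apply_ite Complex.ofReal]
  ring

/-- coefficients of the exponent -/
noncomputable def coef {M : ℕ} (l q s : ℂ) (h : Fin (M + 3) → ℂ) (j : Fin (M + 3)) : ℂ :=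
  l * ((if j = 0 then 1 else 0) + (if j = 1 then s else 0))
    + (if j = Fin.last (M + 2) then q else 0) - (if j ≠ 0 then h j else 0)

theorem coef_sum {M : ℕ} (l q s : ℂ) (h : Fin (M + 3) → ℂ) (x : Fin (M + 3) → ℝ) :
    l * ((x 0 : ℂ) + (x 1 : ℂ) * s) + (x (Fin.last (M + 2)) : ℂ) * q
      - ∑ j ∈ Finset.univ.filter (fun j => j ≠ (0 : Fin (M + 3))), h j * (x j : ℂ)
      = ∑ j, coef l q s h j * (x j : ℂ) := by
  unfold coef
  rw [Finset.sum_filter]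
  simp only [sub_mul, add_mul, mul_add, Finset.sum_sub_distrib, Finset.sum_add_distrib, ite_mul,
    mul_ite, zero_mul, mul_zero, Finset.sum_ite_eq', Finset.mem_univ, if_true]
  congr 1
  simp
  ring

/-- the explicit particular solution
`Ψ_{αβ} = Φ_α C_{αβ}/(λ_2+μ_1)` of the nonhomogeneous system defining the
dressing kernel in the Davey–Stewartson construction.  Coordinates are indexed
by `Fin (M+3)` (index `0` is `x_1`, index `1` is `x_2`, index `Fin.last (M+2)`
is `x_M`); the spectral parameters `λ, μ ∈ ℝ^{M+1}` are
`lam, mu : Fin (M+4) → ℝ` with `λ_2 = lam 1`, `μ_1 = mu 0`; `σa ∈ {1,−1}` is a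
diagonal entry of `B² = diag(1,−1)`. -/
theorem stmt15 {M : ℕ} (lam mu : Fin (M + 4) → ℝ) (hlm : lam 1 + mu 0 ≠ 0)
    (σa : ℂ) (hσ : σa = 1 ∨ σa = -1)
    (h g : Fin (M + 3) → ℂ) (C0 : ℂ)
    (Φ C Ψ : (Fin (M + 3) → ℝ) → ℂ)
    (hΦ : Φ = fun x => Complex.exp ((lam 1 : ℂ) * ((x 0 : ℂ) + (x 1 : ℂ) * σa)
        + (x (Fin.last (M + 2)) : ℂ) * (lam 1 : ℂ) ^ 2 * σa
        - ∑ j ∈ Finset.univ.filter (fun j => j ≠ (0 : Fin (M + 3))),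
            h j * (x j : ℂ)))
    (hC : C = fun x => Complex.exp ((mu 0 : ℂ) * ((x 0 : ℂ) + (x 1 : ℂ) * σa)
        - (x (Fin.last (M + 2)) : ℂ) * (mu 0 : ℂ) ^ 2 * σa
        - ∑ j ∈ Finset.univ.filter (fun j => j ≠ (0 : Fin (M + 3))),
            g j * (x j : ℂ)) * C0)
    (hΨ : Ψ = fun x => Φ x * C x / ((lam 1 : ℂ) + (mu 0 : ℂ))) :
    (∀ x, pd 0 Ψ x = Φ x * C x) ∧
    (∀ x, pd 1 Ψ x + (h 1 + g 1) * Ψ x = Φ x * σa * C x) ∧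
    (∀ n : Fin (M + 3), n ≠ 0 → n ≠ 1 → n ≠ Fin.last (M + 2) →
      ∀ x, pd n Ψ x + (h n + g n) * Ψ x = 0) ∧
    (∀ x, pd (Fin.last (M + 2)) Ψ x
        + (h (Fin.last (M + 2)) + g (Fin.last (M + 2))) * Ψ x
      = pd 0 Φ x * σa * C x - Φ x * σa * pd 0 C x) := by
  have hΦ' : Φ = fun x => Complex.exp (∑ j, coef (lam 1 : ℂ) ((lam 1 : ℂ) ^ 2 * σa) σa h j
      * (x j : ℂ)) * 1 := by
    rw [hΦ]; funext x
    rw [← coef_sum, mul_one, mul_assoc (x (Fin.last (M + 2)) : ℂ)]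
  have hC' : C = fun x => Complex.exp (∑ j, coef (mu 0 : ℂ) (-((mu 0 : ℂ) ^ 2 * σa)) σa g j
      * (x j : ℂ)) * C0 := by
    rw [hC]; funext x
    rw [← coef_sum]
    congr 2
    ring
  have hΨ' : Ψ = fun x => Complex.exp (∑ j, (coef (lam 1 : ℂ) ((lam 1 : ℂ) ^ 2 * σa) σa h j
      + coef (mu 0 : ℂ) (-((mu 0 : ℂ) ^ 2 * σa)) σa g j) * (x j : ℂ))
      * (C0 / ((lam 1 : ℂ) + (mu 0 : ℂ))) := by
    rw [hΨ, hΦ', hC']; funext x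
    simp only [add_mul, Finset.sum_add_distrib, Complex.exp_add]
    ring
  have pΦ : ∀ k x, pd k Φ x = coef (lam 1 : ℂ) ((lam 1 : ℂ) ^ 2 * σa) σa h k * Φ x := by
    intro k x; rw [hΦ']; exact pd_exp _ _ k x
  have pC : ∀ k x, pd k C x = coef (mu 0 : ℂ) (-((mu 0 : ℂ) ^ 2 * σa)) σa g k * C x := by
    intro k x; rw [hC']; exact pd_exp _ _ k x
  have pΨ : ∀ k x, pd k Ψ x = (coef (lam 1 : ℂ) ((lam 1 : ℂ) ^ 2 * σa) σa h k
      + coef (mu 0 : ℂ) (-((mu 0 : ℂ) ^ 2 * σa)) σa g k) * Ψ x := by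
    intro k x; rw [hΨ']
    exact pd_exp (fun k => coef (lam 1 : ℂ) ((lam 1 : ℂ) ^ 2 * σa) σa h k
      + coef (mu 0 : ℂ) (-((mu 0 : ℂ) ^ 2 * σa)) σa g k) _ k x
  have hne : (lam 1 : ℂ) + (mu 0 : ℂ) ≠ 0 := by exact_mod_cast hlm
  have key : ∀ x, Φ x * C x = ((lam 1 : ℂ) + (mu 0 : ℂ)) * Ψ x := by
    intro x; rw [hΨ]; field_simp
  have e0l : (0 : Fin (M + 3)) ≠ Fin.last (M + 2) := by
    simp [Fin.ext_iff]
  have e1l : (1 : Fin (M + 3)) ≠ Fin.last (M + 2) := by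
    simp [Fin.ext_iff]
  have e01 : (0 : Fin (M + 3)) ≠ 1 := by
    simp [Fin.ext_iff]
  refine ⟨fun x => ?_, fun x => ?_, fun n h0 h1 hl x => ?_, fun x => ?_⟩
  · rw [pΨ, key]
    simp [coef, e0l, e01]
  · rw [pΨ, mul_right_comm, key]
    simp only [coef, e1l, e01.symm, if_true, if_false, ne_eq, not_false_eq_true]
    ring
  · rw [pΨ]
    simp only [coef, h0, h1, hl, if_false, if_true, ne_eq, not_false_eq_true]
    ring
  · rw [pΨ, pΦ, pC]
    simp only [coef, e0l, e01, e0l.symm, e1l.symm, if_true, if_false, ne_eq, not_false_eq_true,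
      not_true_eq_false]
    linear_combination (-((lam 1 : ℂ) - (mu 0 : ℂ)) * σa) * key x
end

section
/- Let C(ν;x), U(ν;x), G²(ν;x) be Q×Q-matrix-valued functions (ν ∈ ℝ^{M+1}, x ∈ ℝ^M), twice differentiable in x, let g²_{αβ}(ν) be scalar functions and B² a constant diagonal matrix. Define u(x) = ∫ C U dν, u¹(x) = ∫ (∂_{x_1}C) U dν, u²(x) = ∫ (∂²_{x_1}C) U dν, assume all integrals converge absolutely and x-derivatives may be taken under the integral sign. Assume C satisfies entrywise ∂_{x_2}C_{αβ} + g²_{αβ}(ν) C_{αβ} − B²_α ∂_{x_1}C_{αβ} = 0, and U satisfies pointwise in ν: ∂_{x_2}U − (∂_{x_1}U)B² + U[B²,u] − G² = 0. Then u¹ satisfies ∂_{x_2}u¹ − (∂_{x_1}u¹)B² + u¹[B²,u] = [B²,u²] − ∫ (∂_{x_1}C^{12})(ν;x) U(ν;x) dν + ∫ (∂_{x_1}C)(ν;x) G²(ν;x) dν, where C^{12}_{αβ}(ν;x) = C_{αβ}(ν;x) g²_{αβ}(ν). -/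
open MeasureTheory Finset

theorem pd_symm_aux {N : ℕ} (f : (Fin N → ℝ) → ℂ) (hf : ContDiff ℝ 2 f) (j k : Fin N)
    (x : Fin N → ℝ) : pd j (pd k f) x = pd k (pd j f) x := by
  have hd : DifferentiableAt ℝ (fderiv ℝ f) x :=
    ((hf.fderiv_right (m := 1) (by norm_num)).differentiable (by norm_num)) x
  have hs : IsSymmSndFDerivAt ℝ f x :=
    hf.contDiffAt.isSymmSndFDerivAt (by simp)
  have key : ∀ a b : Fin N, pd a (pd b f) x
      = fderiv ℝ (fderiv ℝ f) x (Pi.single a 1) (Pi.single b 1) := by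
    intro a b
    have h2 := (hd.hasFDerivAt.clm_apply
      (hasFDerivAt_const (Pi.single b (1 : ℝ) : Fin N → ℝ) x)).fderiv
    have h3 : pd b f = fun y => fderiv ℝ f y (Pi.single b 1) := rfl
    rw [h3]
    unfold pd
    rw [h2]
    simp
  rw [key, key]
  exact hs.eq _ _

theorem pd_diff_aux {N : ℕ} (f : (Fin N → ℝ) → ℂ) (hf : ContDiff ℝ 2 f) (k : Fin N) :
    Differentiable ℝ (pd k f) := by
  have hd : Differentiable ℝ (fderiv ℝ f) :=
    (hf.fderiv_right (m := 1) (by norm_num)).differentiable (by norm_num)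
  exact hd.clm_apply (differentiable_const _)

theorem pd_mul_aux {N : ℕ} (f h : (Fin N → ℝ) → ℂ) (hf : Differentiable ℝ f)
    (hh : Differentiable ℝ h) (k : Fin N) (x : Fin N → ℝ) :
    pd k (fun y => f y * h y) x = pd k f x * h x + f x * pd k h x := by
  unfold pd
  rw [fderiv_fun_mul (hf x) (hh x)]
  simp
  ring

/-- applying `∂_{x_1}C` to the first spectral equation yields the
auxiliary equation for `u¹` in the Davey–Stewartson construction.  Coordinates
are indexed by `Fin (M+2)` (index `0` is `x_1`, index `1` is `x_2`); spectral
parameters `ν ∈ ℝ^{M+1}` by `Fin (M+3)`.  Entrywise: `g α β ν = g²_{αβ}(ν)`,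
`B α = B²_α` (diagonal `B²`). -/
theorem stmt17 {M Q : ℕ}
    (C U G : Fin Q → Fin Q → (Fin (M + 3) → ℝ) → (Fin (M + 2) → ℝ) → ℂ)
    (g : Fin Q → Fin Q → (Fin (M + 3) → ℝ) → ℂ) (B : Fin Q → ℂ)
    -- twice differentiable in x (entrywise)
    (hCd : ∀ α γ ν, ContDiff ℝ 2 (C α γ ν))
    (hUd : ∀ γ β ν, ContDiff ℝ 2 (U γ β ν))
    (hGd : ∀ γ β ν, ContDiff ℝ 2 (G γ β ν))
    (u u1 u2 : Fin Q → Fin Q → (Fin (M + 2) → ℝ) → ℂ)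
    (hu : ∀ α β x, u α β x = ∫ ν, ∑ γ, C α γ ν x * U γ β ν x)
    (hu1 : ∀ α β x, u1 α β x = ∫ ν, ∑ γ, pd 0 (C α γ ν) x * U γ β ν x)
    (hu2 : ∀ α β x, u2 α β x = ∫ ν, ∑ γ, pd 0 (pd 0 (C α γ ν)) x * U γ β ν x)
    -- absolute convergence of all integrals involved
    (hiu : ∀ α β x, Integrable fun ν => ∑ γ, C α γ ν x * U γ β ν x)
    (hiu1 : ∀ α β x, Integrable fun ν => ∑ γ, pd 0 (C α γ ν) x * U γ β ν x)
    (hiu2 : ∀ α β x, Integrable fun ν => ∑ γ, pd 0 (pd 0 (C α γ ν)) x * U γ β ν x)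
    (hiG : ∀ α β x, Integrable fun ν => ∑ γ, pd 0 (C α γ ν) x * G γ β ν x)
    (hig : ∀ α β x, Integrable fun ν => ∑ γ, pd 0 (C α γ ν) x * g α γ ν * U γ β ν x)
    (hiCU : ∀ (k : Fin (M + 2)) α β x,
      Integrable fun ν => ∑ γ, pd k (pd 0 (C α γ ν)) x * U γ β ν x)
    (hiCU' : ∀ (k : Fin (M + 2)) α β x,
      Integrable fun ν => ∑ γ, pd 0 (C α γ ν) x * pd k (U γ β ν) x)
    -- x-derivatives of u, u¹, u² may be taken under the integral sign
    (hswapu : ∀ (k : Fin (M + 2)) α β x,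
      pd k (u α β) x = ∫ ν, ∑ γ, pd k (fun y => C α γ ν y * U γ β ν y) x)
    (hswapu1 : ∀ (k : Fin (M + 2)) α β x,
      pd k (u1 α β) x = ∫ ν, ∑ γ, pd k (fun y => pd 0 (C α γ ν) y * U γ β ν y) x)
    (hswapu2 : ∀ (k : Fin (M + 2)) α β x,
      pd k (u2 α β) x = ∫ ν, ∑ γ, pd k (fun y => pd 0 (pd 0 (C α γ ν)) y * U γ β ν y) x)
    -- the dressing equation for C, entrywise
    (hC : ∀ α γ ν x, pd 1 (C α γ ν) x + g α γ ν * C α γ ν x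
        - B α * pd 0 (C α γ ν) x = 0)
    -- the spectral equation for U, pointwise in ν
    (hU : ∀ γ β ν x, pd 1 (U γ β ν) x - pd 0 (U γ β ν) x * B β
        + (∑ δ, U γ δ ν x * (B δ * u δ β x - u δ β x * B β)) - G γ β ν x = 0) :
    -- conclusion: the auxiliary equation for u¹
    ∀ α β x,
      pd 1 (u1 α β) x - pd 0 (u1 α β) x * B β
        + (∑ δ, u1 α δ x * (B δ * u δ β x - u δ β x * B β))
      = (B α * u2 α β x - u2 α β x * B β)
        - (∫ ν, ∑ γ, pd 0 (C α γ ν) x * g α γ ν * U γ β ν x)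
        + ∫ ν, ∑ γ, pd 0 (C α γ ν) x * G γ β ν x := by
  intro α β x
  have dU : ∀ γ β ν, Differentiable ℝ (U γ β ν) := fun γ β ν =>
    (hUd γ β ν).differentiable (by norm_num)
  have dC : ∀ γ β ν, Differentiable ℝ (C γ β ν) := fun γ β ν =>
    (hCd γ β ν).differentiable (by norm_num)
  have hsplit : ∀ k : Fin (M + 2), pd k (u1 α β) x
      = (∫ ν, ∑ γ, pd k (pd 0 (C α γ ν)) x * U γ β ν x)
        + ∫ ν, ∑ γ, pd 0 (C α γ ν) x * pd k (U γ β ν) x := by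
    intro k
    rw [hswapu1, ← integral_add (hiCU k α β x) (hiCU' k α β x)]
    congr 1
    funext ν
    rw [← Finset.sum_add_distrib]
    refine Finset.sum_congr rfl fun γ _ => ?_
    exact pd_mul_aux _ _ (pd_diff_aux _ (hCd α γ ν) 0) (dU γ β ν) k x
  have hmix : ∀ γ ν, pd 1 (pd 0 (C α γ ν)) x
      = B α * pd 0 (pd 0 (C α γ ν)) x - pd 0 (C α γ ν) x * g α γ ν := by
    intro γ ν
    rw [pd_symm_aux _ (hCd α γ ν)]
    have e : pd 1 (C α γ ν) = fun y => B α * pd 0 (C α γ ν) y - g α γ ν * C α γ ν y := by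
      funext y
      linear_combination hC α γ ν y
    have d0 := pd_diff_aux _ (hCd α γ ν) 0 x
    have d1 := dC α γ ν x
    rw [e]
    change fderiv ℝ _ x _ = B α * fderiv ℝ _ x _ - fderiv ℝ _ x _ * _
    rw [fderiv_fun_sub (d0.const_mul _) (d1.const_mul _), fderiv_const_mul d0,
      fderiv_const_mul d1]
    simp
    ring
  have hA : (∫ ν, ∑ γ, pd 1 (pd 0 (C α γ ν)) x * U γ β ν x)
      = B α * u2 α β x - ∫ ν, ∑ γ, pd 0 (C α γ ν) x * g α γ ν * U γ β ν x := by
    rw [hu2, ← integral_const_mul, ← integral_sub ((hiu2 α β x).const_mul _) (hig α β x)]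
    congr 1
    funext ν
    rw [Finset.mul_sum, ← Finset.sum_sub_distrib]
    refine Finset.sum_congr rfl fun γ _ => ?_
    rw [hmix]
    ring
  have hK : (∑ δ, u1 α δ x * (B δ * u δ β x - u δ β x * B β))
      = ∫ ν, ∑ δ, (∑ γ, pd 0 (C α γ ν) x * U γ δ ν x) *
          (B δ * u δ β x - u δ β x * B β) := by
    rw [integral_finset_sum _ fun δ _ => (hiu1 α δ x).mul_const _]
    refine Finset.sum_congr rfl fun δ _ => ?_
    rw [hu1, integral_mul_const]
  have hiK : Integrable fun ν => ∑ δ, (∑ γ, pd 0 (C α γ ν) x * U γ δ ν x) *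
          (B δ * u δ β x - u δ β x * B β) :=
    integrable_finset_sum _ fun δ _ => (hiu1 α δ x).mul_const _
  have hB : (∫ ν, ∑ γ, pd 0 (C α γ ν) x * pd 1 (U γ β ν) x)
        + (∑ δ, u1 α δ x * (B δ * u δ β x - u δ β x * B β))
      = (∫ ν, ∑ γ, pd 0 (C α γ ν) x * pd 0 (U γ β ν) x) * B β
        + ∫ ν, ∑ γ, pd 0 (C α γ ν) x * G γ β ν x := by
    rw [hK, ← integral_add (hiCU' 1 α β x) hiK, ← integral_mul_const,
      ← integral_add ((hiCU' 0 α β x).mul_const _) (hiG α β x)]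
    congr 1
    funext ν
    simp only [Finset.sum_mul]
    rw [Finset.sum_comm, ← Finset.sum_add_distrib, ← Finset.sum_add_distrib]
    refine Finset.sum_congr rfl fun γ _ => ?_
    simp only [mul_assoc]
    rw [← Finset.mul_sum]
    linear_combination pd 0 (C α γ ν) x * hU γ β ν x
  have h0 := hsplit 0
  rw [← hu2] at h0
  rw [hsplit 1, h0, hA]
  linear_combination hB
end

section
/- Let σ = diag(1,−1) and let u, u¹, u² : ℝ^M → M_2(ℂ) be smooth 2×2-matrix-valued functions, with entries u = (u_{11}, u_{12}; u_{21}, u_{22}). Assume the three equations: (a) ∂_{x_2}u − (∂_{x_1}u)σ + u[σ,u] = [σ,u¹]; (b) ∂_{x_2}u¹ − (∂_{x_1}u¹)σ + u¹[σ,u] = [σ,u²]; (c) ∂_{x_M}u − (∂²_{x_1}u)σ + u( u[σ,u] − 2(∂_{x_1}u)σ ) + (∂_{x_1}u)[σ,u] = −2(∂_{x_1}u¹)σ − u[u¹,σ] + u¹[σ,u] − [σ,u²]. Then, eliminating u¹ and u², the off-diagonal part u^{of} of u (the matrix with entries u_{12}, u_{21} and zero diagonal) satisfies the Davey–Stewartson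 system: [∂_{x_M}u^{of}, σ] − ∂²_{x_1}u^{of} − ∂²_{x_2}u^{of} − 8 u_{12}u_{21} u^{of} − 4 φ u^{of} = 0, together with ∂²_{x_2}φ − ∂²_{x_1}φ = 4 ∂²_{x_1}( u_{12}u_{21} ), where φ = ∂_{x_1}( u_{11} + u_{22} ). -/
open MeasureTheory Finset

abbrev Sm {N : ℕ} (f : (Fin N → ℝ) → ℂ) : Prop := ContDiff ℝ (⊤ : ℕ∞) f

lemma Sm.da {N : ℕ} {f : (Fin N → ℝ) → ℂ} (hf : Sm f) (x) : DifferentiableAt ℝ f x :=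
  (ContDiff.differentiable hf (by simp)).differentiableAt

lemma pd_smooth {N : ℕ} (k : Fin N) {f : (Fin N → ℝ) → ℂ} (hf : Sm f) : Sm (pd k f) := by
  have h : ContDiff ℝ (⊤ : ℕ∞) (fderiv ℝ f) := ContDiff.fderiv_right hf (by simp)
  exact h.clm_apply contDiff_const

lemma pd_add' {N : ℕ} (k : Fin N) {f g : (Fin N → ℝ) → ℂ} (hf : Sm f) (hg : Sm g) :
    pd k (f + g) = pd k f + pd k g := by
  funext x
  simp [pd, fderiv_add (hf.da x) (hg.da x)]

lemma pd_sub' {N : ℕ} (k : Fin N) {f g : (Fin N → ℝ) → ℂ} (hf : Sm f) (hg : Sm g) :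
    pd k (f - g) = pd k f - pd k g := by
  funext x
  simp [pd, fderiv_sub (hf.da x) (hg.da x)]

lemma pd_mul' {N : ℕ} (k : Fin N) {f g : (Fin N → ℝ) → ℂ} (hf : Sm f) (hg : Sm g) :
    pd k (f * g) = f * pd k g + g * pd k f := by
  funext x
  simp [pd, fderiv_mul (hf.da x) (hg.da x)]

lemma pd_smul' {N : ℕ} (k : Fin N) (c : ℂ) {f : (Fin N → ℝ) → ℂ} (hf : Sm f) :
    pd k (c • f) = c • pd k f := by
  funext x
  simp [pd, fderiv_const_smul (hf.da x) c]

lemma pd_comm' {N : ℕ} (j k : Fin N) {f : (Fin N → ℝ) → ℂ} (hf : Sm f) :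
    pd j (pd k f) = pd k (pd j f) := by
  funext x
  have h : ContDiff ℝ (⊤ : ℕ∞) (fderiv ℝ f) := ContDiff.fderiv_right hf (by simp)
  have hd : DifferentiableAt ℝ (fderiv ℝ f) x := (h.differentiable (by simp)).differentiableAt
  have key : ∀ a b : Fin N, pd a (pd b f) x
      = fderiv ℝ (fderiv ℝ f) x (Pi.single a 1) (Pi.single b 1) := by
    intro a b
    unfold pd
    rw [fderiv_clm_apply hd (by fun_prop)]
    simp
  rw [key, key]
  have hs : IsSymmSndFDerivAt ℝ f x :=
    (ContDiff.contDiffAt hf).isSymmSndFDerivAt (by simpa using WithTop.coe_le_coe.2 (le_top : (2 : ℕ∞) ≤ ⊤))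
  exact hs _ _

lemma mpd_apply {N Q : ℕ} (k : Fin N) (f : (Fin N → ℝ) → Matrix (Fin Q) (Fin Q) ℂ) (x a b) :
    mpd k f x a b = pd k (fun y => f y a b) x := rfl

lemma mpd_mpd_apply {N Q : ℕ} (j k : Fin N) (f : (Fin N → ℝ) → Matrix (Fin Q) (Fin Q) ℂ)
    (x a b) : mpd j (mpd k f) x a b = pd j (pd k (fun y => f y a b)) x := rfl

lemma pd_zero' {N : ℕ} (k : Fin N) : pd k (fun _ => (0 : ℂ)) = fun _ => 0 := by
  funext x
  simp [pd]

/-- the classical reduction of the dressed system to the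
(2+1)-dimensional Davey–Stewartson equation.  Coordinates are indexed by
`Fin (M+3)` (index `0` is `x_1`, index `1` is `x_2`, index `Fin.last (M+2)` is
`x_M`, dimension at least 3); `σ = B² = diag(1,−1)`. -/
theorem stmt18 {M : ℕ}
    (σ : Matrix (Fin 2) (Fin 2) ℂ) (hσ : σ = Matrix.diagonal ![1, -1])
    (u u1 u2 : (Fin (M + 3) → ℝ) → Matrix (Fin 2) (Fin 2) ℂ)
    (hus : ∀ a b, ContDiff ℝ (⊤ : ℕ∞) fun x => u x a b)
    (hu1s : ∀ a b, ContDiff ℝ (⊤ : ℕ∞) fun x => u1 x a b)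
    (hu2s : ∀ a b, ContDiff ℝ (⊤ : ℕ∞) fun x => u2 x a b)
    -- (a)
    (ha : ∀ x, mpd 1 u x - mpd 0 u x * σ + u x * (σ * u x - u x * σ)
        = σ * u1 x - u1 x * σ)
    -- (b)
    (hb : ∀ x, mpd 1 u1 x - mpd 0 u1 x * σ + u1 x * (σ * u x - u x * σ)
        = σ * u2 x - u2 x * σ)
    -- (c)
    (hc : ∀ x, mpd (Fin.last (M + 2)) u x - mpd 0 (mpd 0 u) x * σ
          + u x * (u x * (σ * u x - u x * σ) - (2 : ℂ) • (mpd 0 u x * σ))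
          + mpd 0 u x * (σ * u x - u x * σ)
        = -(2 : ℂ) • (mpd 0 u1 x * σ) - u x * (u1 x * σ - σ * u1 x)
          + u1 x * (σ * u x - u x * σ) - (σ * u2 x - u2 x * σ))
    -- the off-diagonal part of u and the auxiliary potential φ
    (uof : (Fin (M + 3) → ℝ) → Matrix (Fin 2) (Fin 2) ℂ)
    (huof : ∀ x, uof x = Matrix.of ![![0, u x 0 1], ![u x 1 0, 0]])
    (φ : (Fin (M + 3) → ℝ) → ℂ)
    (hφ : φ = fun x => pd 0 (fun y => u y 0 0 + u y 1 1) x) :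
    -- the Davey–Stewartson system
    (∀ x, mpd (Fin.last (M + 2)) uof x * σ - σ * mpd (Fin.last (M + 2)) uof x
        - mpd 0 (mpd 0 uof) x - mpd 1 (mpd 1 uof) x
        - (8 * u x 0 1 * u x 1 0) • uof x - (4 * φ x) • uof x = 0) ∧
    (∀ x, pd 1 (pd 1 φ) x - pd 0 (pd 0 φ) x
        = 4 * pd 0 (pd 0 (fun y => u y 0 1 * u y 1 0)) x) := by
  subst hσ
  subst hφ
  obtain rfl : uof = fun x => Matrix.of ![![0, u x 0 1], ![u x 1 0, 0]] := funext huof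
  have ent : ∀ {A B : Matrix (Fin 2) (Fin 2) ℂ}, A = B → ∀ i j, A i j = B i j := by
    intro A B h i j
    rw [h]
  obtain ⟨p, hp⟩ : ∃ p : (Fin (M + 3) → ℝ) → ℂ, p = fun x => u x 0 0 := ⟨_, rfl⟩
  obtain ⟨q, hq⟩ : ∃ p : (Fin (M + 3) → ℝ) → ℂ, p = fun x => u x 0 1 := ⟨_, rfl⟩
  obtain ⟨r, hr⟩ : ∃ p : (Fin (M + 3) → ℝ) → ℂ, p = fun x => u x 1 0 := ⟨_, rfl⟩
  obtain ⟨s, hs⟩ : ∃ p : (Fin (M + 3) → ℝ) → ℂ, p = fun x => u x 1 1 := ⟨_, rfl⟩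
  obtain ⟨q1, hq1⟩ : ∃ p : (Fin (M + 3) → ℝ) → ℂ, p = fun x => u1 x 0 1 := ⟨_, rfl⟩
  obtain ⟨r1, hr1⟩ : ∃ p : (Fin (M + 3) → ℝ) → ℂ, p = fun x => u1 x 1 0 := ⟨_, rfl⟩
  have sp : Sm p := hp ▸ hus 0 0
  have sq : Sm q := hq ▸ hus 0 1
  have sr : Sm r := hr ▸ hus 1 0
  have ss : Sm s := hs ▸ hus 1 1
  have sq1 : Sm q1 := hq1 ▸ hu1s 0 1
  have sr1 : Sm r1 := hr1 ▸ hu1s 1 0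
  have ep : ∀ x, u x 0 0 = p x := fun x => by rw [hp]
  have eq : ∀ x, u x 0 1 = q x := fun x => by rw [hq]
  have er : ∀ x, u x 1 0 = r x := fun x => by rw [hr]
  have es : ∀ x, u x 1 1 = s x := fun x => by rw [hs]
  have eq1 : ∀ x, u1 x 0 1 = q1 x := fun x => by rw [hq1]
  have er1 : ∀ x, u1 x 1 0 = r1 x := fun x => by rw [hr1]
  have a11 : ∀ x, pd 1 p x = pd 0 p x + 2 * (q x * r x) := by
    intro x
    have h := ent (ha x) 0 0
    simp [Matrix.mul_apply, Fin.sum_univ_two, mpd_apply, ep, eq, er, es, Matrix.diagonal] at h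
    linear_combination h
  have a22 : ∀ x, pd 1 s x = -pd 0 s x - 2 * (q x * r x) := by
    intro x
    have h := ent (ha x) 1 1
    simp [Matrix.mul_apply, Fin.sum_univ_two, mpd_apply, ep, eq, er, es, Matrix.diagonal] at h
    linear_combination h
  have a12 : ∀ x, 2 * q1 x = pd 1 q x + pd 0 q x + 2 * (p x * q x) := by
    intro x
    have h := ent (ha x) 0 1
    simp [Matrix.mul_apply, Fin.sum_univ_two, mpd_apply, ep, eq, er, es, eq1, er1,
      Matrix.diagonal] at h
    linear_combination -h
  have a21 : ∀ x, 2 * r1 x = pd 0 r x - pd 1 r x + 2 * (s x * r x) := by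
    intro x
    have h := ent (ha x) 1 0
    simp [Matrix.mul_apply, Fin.sum_univ_two, mpd_apply, ep, eq, er, es, eq1, er1,
      Matrix.diagonal] at h
    linear_combination h
  have A12 : (2 : ℂ) • q1 = pd 1 q + pd 0 q + (2 : ℂ) • (p * q) := by
    funext x
    simpa using a12 x
  have A21 : (2 : ℂ) • r1 = pd 0 r - pd 1 r + (2 : ℂ) • (s * r) := by
    funext x
    simpa using a21 x
  have A11 : pd 1 p = pd 0 p + (2 : ℂ) • (q * r) := by
    funext x
    simpa using a11 x
  have A22 : pd 1 s = (-1 : ℂ) • pd 0 s - (2 : ℂ) • (q * r) := by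
    funext x
    simpa using a22 x
  have dq : ∀ k x, 2 * pd k q1 x
      = pd k (pd 1 q) x + pd k (pd 0 q) x + 2 * (p x * pd k q x + q x * pd k p x) := by
    intro k x
    have t1 : Sm (pd 1 q + pd 0 q) := (pd_smooth 1 sq).add (pd_smooth 0 sq)
    have t2 : Sm (p * q) := sp.mul sq
    have t3 : Sm ((2 : ℂ) • (p * q)) := t2.const_smul (2 : ℂ)
    have h := congrFun (congrArg (pd k) A12) x
    rw [pd_smul' k 2 sq1, pd_add' k t1 t3, pd_add' k (pd_smooth 1 sq) (pd_smooth 0 sq),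
      pd_smul' k 2 t2, pd_mul' k sp sq] at h
    simpa [mul_add] using h
  have dr : ∀ k x, 2 * pd k r1 x
      = pd k (pd 0 r) x - pd k (pd 1 r) x + 2 * (s x * pd k r x + r x * pd k s x) := by
    intro k x
    have t1 : Sm (pd 0 r - pd 1 r) := (pd_smooth 0 sr).sub (pd_smooth 1 sr)
    have t2 : Sm (s * r) := ss.mul sr
    have t3 : Sm ((2 : ℂ) • (s * r)) := t2.const_smul (2 : ℂ)
    have h := congrFun (congrArg (pd k) A21) x
    rw [pd_smul' k 2 sr1, pd_add' k t1 t3, pd_sub' k (pd_smooth 0 sr) (pd_smooth 1 sr),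
      pd_smul' k 2 t2, pd_mul' k ss sr] at h
    simpa [mul_add] using h
  have hφ' : (fun x => pd 0 (fun y => u y 0 0 + u y 1 1) x) = pd 0 p + pd 0 s := by
    rw [← pd_add' 0 sp ss, hp, hs]
    rfl
  have hqr : (fun y => u y 0 1 * u y 1 0) = q * r := by
    rw [hq, hr]
    rfl
  have cq := pd_comm' 0 1 sq
  have cr := pd_comm' 0 1 sr
  refine ⟨?_, ?_⟩
  · intro x
    have hφx := congrFun hφ' x
    simp only [Pi.add_apply] at hφx
    have hb12 := ent (hb x) 0 1
    have hb21 := ent (hb x) 1 0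
    have hc12 := ent (hc x) 0 1
    have hc21 := ent (hc x) 1 0
    simp [Matrix.mul_apply, Fin.sum_univ_two, mpd_mpd_apply, mpd_apply, ep, eq, er, es, eq1, er1,
      Matrix.diagonal] at hb12 hb21 hc12 hc21
    have cqx := congrFun cq x
    have crx := congrFun cr x
    have q0 := dq 0 x
    have q1' := dq 1 x
    have r0 := dr 0 x
    have r1' := dr 1 x
    have b11 := a11 x
    have b22 := a22 x
    have b12 := a12 x
    have b21 := a21 x
    ext i j
    fin_cases i <;> fin_cases j
    · simp [Matrix.mul_apply, Fin.sum_univ_two, mpd_mpd_apply, mpd_apply, Matrix.diagonal, pd_zero']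
    · simp [Matrix.mul_apply, Fin.sum_univ_two, mpd_mpd_apply, mpd_apply, Matrix.diagonal, pd_zero',
        ep, eq, er, es] at hφx ⊢
      rw [hφx]
      linear_combination (-2) * hc12 - 2 * hb12 - q0 + q1' - 2 * p x * b12 - cqx + 2 * q x * b11
    · simp [Matrix.mul_apply, Fin.sum_univ_two, mpd_mpd_apply, mpd_apply, Matrix.diagonal, pd_zero',
        ep, eq, er, es] at hφx ⊢
      rw [hφx]
      linear_combination 2 * hc21 + 2 * hb21 - r0 - r1' - 2 * s x * b21 + crx - 2 * r x * b22
    · simp [Matrix.mul_apply, Fin.sum_univ_two, mpd_mpd_apply, mpd_apply, Matrix.diagonal, pd_zero']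
  · intro x
    rw [hφ', hqr]
    have sqr : Sm (q * r) := sq.mul sr
    have h0p := pd_smooth 0 sp
    have h0s := pd_smooth 0 ss
    have s00p := pd_smooth 0 h0p
    have s00s := pd_smooth 0 h0s
    have sqr0 := pd_smooth 0 sqr
    have t1 : Sm ((2 : ℂ) • (q * r)) := sqr.const_smul (2 : ℂ)
    have t2 : Sm ((-1 : ℂ) • pd 0 s) := h0s.const_smul (-1 : ℂ)
    have t3 : Sm ((-1 : ℂ) • pd 0 (pd 0 s)) := s00s.const_smul (-1 : ℂ)
    have t4 : Sm ((2 : ℂ) • pd 0 (q * r)) := sqr0.const_smul (2 : ℂ)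
    have e1 : pd 1 (pd 0 p + pd 0 s) = pd 0 (pd 0 p) - pd 0 (pd 0 s) := by
      rw [pd_add' 1 h0p h0s, pd_comm' 1 0 sp, pd_comm' 1 0 ss, A11, A22,
        pd_add' 0 h0p t1,
        pd_sub' 0 t2 t1, pd_smul' 0 _ h0s]
      module
    have e2 : pd 1 (pd 0 (pd 0 p)) = pd 0 (pd 0 (pd 0 p)) + (2 : ℂ) • pd 0 (pd 0 (q * r)) := by
      rw [pd_comm' 1 0 h0p, pd_comm' 1 0 sp, A11, pd_add' 0 h0p t1,
        pd_smul' 0 _ sqr, pd_add' 0 s00p t4, pd_smul' 0 _ sqr0]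
    have e3 : pd 1 (pd 0 (pd 0 s))
        = (-1 : ℂ) • pd 0 (pd 0 (pd 0 s)) - (2 : ℂ) • pd 0 (pd 0 (q * r)) := by
      rw [pd_comm' 1 0 h0s, pd_comm' 1 0 ss, A22,
        pd_sub' 0 t2 t1,
        pd_smul' 0 _ sqr, pd_smul' 0 _ h0s,
        pd_sub' 0 t3 t4, pd_smul' 0 _ sqr0,
        pd_smul' 0 _ s00s]
    rw [e1, pd_sub' 1 s00p s00s, e2, e3, pd_add' 0 h0p h0s, pd_add' 0 s00p s00s]
    simp
    ring
end
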